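/- (Proposition 3.5, finite state space.) Assume (A1): each A(t), B(t) is a generator matrix, A(t) is weakly irreducible for every t ∈ [0,T] with quasi-stationary distribution ν(t), A is twice continuously differentiable and B is continuously differentiable on [0,T]. Let f : {1,…,m} → ℝ, F = (f(1),…,f(m))', and let α_ε be a Markov chain with transition matrices P_ε; let η_ε(s) ∈ ℝ^{1×m} be the indicator row vector with i-th entry 1_{α_ε(s)=i}, and define M̃_ε(t) = ∫_0^t [ (η_ε(s) − ν(s)) F − η_ε(0)(P_ε(0,s) − 𝟙ν(s)) F ] ds. Then there exist constants K > 0 and ε₀ > 0, depending only on T, A, B and f, such that for every ε ∈ (0, ε₀], almost surely sup_{0≤t≤T} | ξ_ε(t) − ε^{−1/2} M̃_ε(t) | ≤ K √ε. -/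

import Mathlib

/-!
The difference `ξ_ε(t) - ε^{-1/2} M̃_ε(t)` is `ε^{-1/2} ∫₀ᵗ (p(s) - ν(s)) F ds`, where `p(s)` is the
row of `P_ε(0,s)` selected by the initial state, so it suffices to bound this integral by `K ε`.

Let `J` be the all-ones matrix. Weak irreducibility makes `A(s) + J` invertible, so by Cramer's
rule `h(s) = (A(s) + J)⁻¹ F` is continuously differentiable in `s`. It solves the Poisson equation
`A h = F - (ν F) 𝟙`, because `ν (A + J) = 𝟙ᵀ` yields `ν F = 𝟙ᵀ h` (`exists_poisson`).
The forward equation together with `p 𝟙 = 1` then gives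
`(p - ν) F = ε ((p h)' - p (B h + h'))`; integrating, and using that `p` is a probability vector
and that `h`, `h'`, `B` are bounded on `[0,T]`, one obtains the bound (`integral_bound`).

Nonnegativity of `p` is read off the Markov property: conditional probabilities are nonnegative, so
`P_ε(0,t)^{ij} ≥ 0` for every initial state `i` of positive probability
(`ae_row_nonneg`).
-/

open MeasureTheory Matrix ProbabilityTheory Filter

/-- An `m × m` real matrix `G` is a generator matrix if its off-diagonal entries are
nonnegative and every row sums to zero. -/
def IsGenerator {m : ℕ} (G : Matrix (Fin m) (Fin m) ℝ) : Prop :=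
  (∀ i j, i ≠ j → 0 ≤ G i j) ∧ ∀ i, ∑ j, G i j = 0

/-- `ν` is the quasi-stationary distribution of a weakly irreducible generator `A`:
it is the unique solution of `ν A = 0`, `∑ ν i = 1`, and it is nonnegative. -/
def IsQuasiStationary {m : ℕ} (A : Matrix (Fin m) (Fin m) ℝ) (ν : Fin m → ℝ) : Prop :=
  ν ᵥ* A = 0 ∧ (∑ i, ν i) = 1 ∧ (∀ i, 0 ≤ ν i) ∧
    ∀ μ : Fin m → ℝ, μ ᵥ* A = 0 → (∑ i, μ i) = 1 → μ = ν

/-- The matrix `𝟙ν` each of whose rows equals the row vector `ν`. -/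
def oneNu {m : ℕ} (ν : Fin m → ℝ) : Matrix (Fin m) (Fin m) ℝ :=
  Matrix.of fun _ j => ν j

/-- `P` solves, on `[t₀, T]`, the forward equation `∂ₜ P(t) = P(t) G(t)`, `P(t₀) = I`
(stated entrywise). -/
def IsForwardSolution {m : ℕ} (G : ℝ → Matrix (Fin m) (Fin m) ℝ) (T t₀ : ℝ)
    (P : ℝ → Matrix (Fin m) (Fin m) ℝ) : Prop :=
  P t₀ = 1 ∧ ∀ t ∈ Set.Icc t₀ T, ∀ i j,
    HasDerivWithinAt (fun u => P u i j) ((P t * G t) i j) (Set.Icc t₀ T) t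

/-- Hypothesis (A1): `A(t)`, `B(t)` are generator matrices, `A(t)` is weakly irreducible with
quasi-stationary distribution `ν(t)` on `[0,T]`, `A` is `C²` and `B` is `C¹` on `[0,T]`. -/
def HypA1 {m : ℕ} (T : ℝ) (A B : ℝ → Matrix (Fin m) (Fin m) ℝ) (ν : ℝ → Fin m → ℝ) : Prop :=
  (∀ t ∈ Set.Icc (0:ℝ) T, IsGenerator (A t)) ∧
  (∀ t ∈ Set.Icc (0:ℝ) T, IsGenerator (B t)) ∧
  (∀ t ∈ Set.Icc (0:ℝ) T, IsQuasiStationary (A t) (ν t)) ∧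
  ContDiffOn ℝ 2 (fun t (i j : Fin m) => A t i j) (Set.Icc (0:ℝ) T) ∧
  ContDiffOn ℝ 1 (fun t (i j : Fin m) => B t i j) (Set.Icc (0:ℝ) T)

/-- The σ-algebra `σ(α(u) : 0 ≤ u ≤ s)` generated by the chain up to time `s`. -/
def chainFiltration {m : ℕ} {Ω : Type*} (α : ℝ → Ω → Fin m) (s : ℝ) :
    MeasurableSpace Ω :=
  ⨆ u ∈ Set.Icc (0:ℝ) s, MeasurableSpace.comap (α u) ⊤

/-- A jointly measurable process `α` is a Markov chain on `[0,T]` with transition matrices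
`P(s,t)`: for all `0 ≤ s ≤ t ≤ T` and states `j`,
`μ(α t = j | σ(α u : u ≤ s)) = P(s,t)^{α(s) j}` almost surely. -/
def IsMarkovChain {m : ℕ} {Ω : Type*} [MeasurableSpace Ω] (μ : Measure Ω) (T : ℝ)
    (P : ℝ → ℝ → Matrix (Fin m) (Fin m) ℝ) (α : ℝ → Ω → Fin m) : Prop :=
  Measurable (Function.uncurry α) ∧
  ∀ s t : ℝ, 0 ≤ s → s ≤ t → t ≤ T → ∀ j : Fin m,
    (μ[(fun ω => if α t ω = j then (1:ℝ) else 0) | chainFiltration α s])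
      =ᵐ[μ] fun ω => P s t (α s ω) j

/-- The scaled occupation measure `ξ_ε(t) = ε^{-1/2} ∫_0^t (f(α(s)) - ∑_i f(i) ν^i(s)) ds`. -/
noncomputable def xiOcc {m : ℕ} {Ω : Type*} (ν : ℝ → Fin m → ℝ) (f : Fin m → ℝ)
    (α : ℝ → Ω → Fin m) (ε t : ℝ) (ω : Ω) : ℝ :=
  (Real.sqrt ε)⁻¹ * ∫ s in (0:ℝ)..t, (f (α s ω) - ∑ i, f i * ν s i)

/-- The martingale approximation
`M̃_ε(t) = ∫_0^t [ (η_ε(s) - ν(s)) F - η_ε(0)(P_ε(0,s) - 𝟙ν(s)) F ] ds`,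
where `η_ε(s)` is the indicator row vector of `α_ε(s)`. -/
noncomputable def Mtilde {m : ℕ} {Ω : Type*} (ν : ℝ → Fin m → ℝ) (f : Fin m → ℝ)
    (P : ℝ → ℝ → Matrix (Fin m) (Fin m) ℝ) (α : ℝ → Ω → Fin m) (t : ℝ) (ω : Ω) : ℝ :=
  ∫ s in (0:ℝ)..t,
    ((f (α s ω) - ∑ i, f i * ν s i) - ∑ j, (P 0 s - oneNu (ν s)) (α 0 ω) j * f j)

lemma contDiffOn_det {m : ℕ} {n : WithTop ℕ∞} {S : Set ℝ} {M : ℝ → Matrix (Fin m) (Fin m) ℝ}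
    (hM : ∀ i j, ContDiffOn ℝ n (fun s => M s i j) S) :
    ContDiffOn ℝ n (fun s => (M s).det) S := by
  simp only [Matrix.det_apply']
  exact ContDiffOn.sum fun σ _ =>
    contDiffOn_const.mul (contDiffOn_prod fun i _ => hM _ _)

lemma det_add_ones_ne_zero {m : ℕ} (hm : 1 ≤ m) {A : Matrix (Fin m) (Fin m) ℝ} {ν : Fin m → ℝ}
    (hA : IsGenerator A) (hν : IsQuasiStationary A ν) :
    (A + Matrix.of fun _ _ => (1 : ℝ)).det ≠ 0 := by
  intro hdet
  obtain ⟨v, hv0, hv⟩ := Matrix.exists_vecMul_eq_zero_iff.mpr hdet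
  have hcol : ∀ j, ∑ i, v i * A i j + ∑ i, v i = 0 := by
    intro j
    have := congrFun hv j
    simpa [Matrix.vecMul, dotProduct, mul_add, Finset.sum_add_distrib] using this
  -- Summing over the columns kills the contribution of `A`, whose rows sum to zero.
  have hsum : ∑ i, v i = 0 := by
    have h1 : ∑ j, (∑ i, v i * A i j + ∑ i, v i) = 0 := Finset.sum_eq_zero fun j _ => hcol j
    rw [Finset.sum_add_distrib, Finset.sum_comm] at h1
    simp only [← Finset.mul_sum, hA.2, mul_zero, Finset.sum_const_zero, zero_add,
      Finset.sum_const, Finset.card_univ, Fintype.card_fin, nsmul_eq_mul] at h1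
    have : (m : ℝ) ≠ 0 := by positivity
    exact (mul_eq_zero.mp h1).resolve_left this
  have hvA : v ᵥ* A = 0 := by
    funext j
    have := hcol j
    rw [hsum, add_zero] at this
    simpa [Matrix.vecMul, dotProduct] using this
  obtain ⟨h1, h2, -, h4⟩ := hν
  have := h4 (v + ν) (by rw [Matrix.add_vecMul, hvA, h1, add_zero])
    (by simp [Finset.sum_add_distrib, hsum, h2])
  exact hv0 (by simpa using this)

/-- A continuously differentiable solution `h` of the Poisson equation
`A(s) h(s) = F - (ν(s) F) 𝟙`, normalised so that `𝟙ᵀ h(s) = ν(s) F`. -/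
lemma exists_poisson {m : ℕ} (hm : 1 ≤ m) {S : Set ℝ}
    {A : ℝ → Matrix (Fin m) (Fin m) ℝ} {ν : ℝ → Fin m → ℝ}
    (hA : ∀ t ∈ S, IsGenerator (A t)) (hν : ∀ t ∈ S, IsQuasiStationary (A t) (ν t))
    (hA1 : ∀ i j, ContDiffOn ℝ 1 (fun s => A s i j) S) (f : Fin m → ℝ) :
    ∃ h : ℝ → Fin m → ℝ, (∀ i, ContDiffOn ℝ 1 (fun s => h s i) S) ∧
      ∀ s ∈ S, ∑ i, h s i = ∑ i, f i * ν s i ∧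
        ∀ i, ∑ j, A s i j * h s j = f i - ∑ k, h s k := by
  set M : ℝ → Matrix (Fin m) (Fin m) ℝ := fun s => A s + Matrix.of fun _ _ => (1 : ℝ) with hMdef
  have hM : ∀ i j, ContDiffOn ℝ 1 (fun s => M s i j) S := fun i j => by
    simpa [hMdef] using (hA1 i j).add contDiffOn_const
  have hdet : ∀ s ∈ S, (M s).det ≠ 0 := fun s hs => det_add_ones_ne_zero hm (hA s hs) (hν s hs)
  refine ⟨fun s i => (M s).det⁻¹ * (M s).cramer f i, fun i => ?_, fun s hs => ?_⟩
  · refine ((contDiffOn_det hM).inv hdet).mul ?_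
    simp only [Matrix.cramer_apply]
    refine contDiffOn_det fun k l => ?_
    by_cases hl : l = i
    · subst hl
      simpa using contDiffOn_const
    · simpa [Matrix.updateCol_apply, hl] using hM k l
  · set h : Fin m → ℝ := fun i => (M s).det⁻¹ * (M s).cramer f i with hh
    have hsol : M s *ᵥ h = f := by
      have : h = (M s).det⁻¹ • (M s).cramer f := by
        funext i; simp [hh]
      rw [this, Matrix.mulVec_smul, Matrix.mulVec_cramer, smul_smul,
        inv_mul_cancel₀ (hdet s hs), one_smul]
    have hA' : ∀ i, ∑ j, A s i j * h j = f i - ∑ k, h k := by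
      intro i
      have := congrFun hsol i
      simp only [hMdef, Matrix.mulVec, dotProduct, Matrix.add_apply, Matrix.of_apply, add_mul,
        one_mul, Finset.sum_add_distrib] at this
      linarith
    refine ⟨?_, hA'⟩
    obtain ⟨h1, h2, -, -⟩ := hν s hs
    have h0 : ν s ⬝ᵥ (A s *ᵥ h) = 0 := by
      rw [Matrix.dotProduct_mulVec, h1, zero_dotProduct]
    have h3 : ν s ⬝ᵥ (A s *ᵥ h) = ∑ i, ν s i * (f i - ∑ k, h k) :=
      Finset.sum_congr rfl fun i _ => by rw [← hA' i]; rfl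
    rw [h0] at h3
    simp only [mul_sub, Finset.sum_sub_distrib, ← Finset.sum_mul, h2, one_mul] at h3
    have h4 : ∑ i, f i * ν s i = ∑ i, ν s i * f i :=
      Finset.sum_congr rfl fun i _ => mul_comm _ _
    rw [h4]
    linarith

/-- Averages against a probability vector are bounded by any bound on the averaged function. -/
lemma abs_sum_prob_le {m : ℕ} {p v : Fin m → ℝ} {C : ℝ} (hp : ∀ i, 0 ≤ p i)
    (hp1 : ∑ i, p i = 1) (hv : ∀ i, |v i| ≤ C) : |∑ i, p i * v i| ≤ C := by
  calc |∑ i, p i * v i| ≤ ∑ i, |p i * v i| := Finset.abs_sum_le_sum_abs _ _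
    _ ≤ ∑ i, p i * C := Finset.sum_le_sum fun i _ => by
        rw [abs_mul, abs_of_nonneg (hp i)]
        exact mul_le_mul_of_nonneg_left (hv i) (hp i)
    _ = C := by rw [← Finset.sum_mul, hp1, one_mul]

lemma exists_bound_family {m : ℕ} {T : ℝ} {v : ℝ → Fin m → ℝ}
    (hv : ∀ i, ContinuousOn (fun s => v s i) (Set.Icc 0 T)) :
    ∃ C, 0 ≤ C ∧ ∀ s ∈ Set.Icc (0:ℝ) T, ∀ i, |v s i| ≤ C := by
  obtain ⟨C, hC⟩ := isCompact_Icc.exists_bound_of_continuousOn (continuousOn_pi.mpr hv)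
  refine ⟨max C 0, le_max_right _ _, fun s hs i => ?_⟩
  exact ((norm_le_pi_norm (v s) i).trans (hC s hs)).trans (le_max_left _ _)

/-- For a solution `p` of the forward equation consisting of probability vectors, `(p - ν) F`
integrates to `O(ε)`, with a constant independent of `ε` and of `p`. Continuity of `ν F` on `[0,T]`
comes from the same function `h`, since `ν F = 𝟙ᵀ h`. -/
lemma integral_bound {m : ℕ} (hm : 1 ≤ m) {T : ℝ} (hT : 0 < T)
    {A B : ℝ → Matrix (Fin m) (Fin m) ℝ} {ν : ℝ → Fin m → ℝ}
    (hA1 : HypA1 T A B ν) (f : Fin m → ℝ) :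
    ContinuousOn (fun s => ∑ i, f i * ν s i) (Set.Icc 0 T) ∧
    ∃ K, 0 < K ∧ ∀ ε : ℝ, 0 < ε → ∀ p : ℝ → Fin m → ℝ,
      (∀ t ∈ Set.Icc (0:ℝ) T, ∀ j, HasDerivWithinAt (fun u => p u j)
        (∑ i, p t i * (ε⁻¹ * A t i j + B t i j)) (Set.Icc 0 T) t) →
      (∑ i, p 0 i = 1) → (∀ t ∈ Set.Icc (0:ℝ) T, ∀ j, 0 ≤ p t j) →
      ∀ t ∈ Set.Icc (0:ℝ) T,
        |∫ s in (0:ℝ)..t, (∑ j, p s j * f j - ∑ i, f i * ν s i)| ≤ K * ε := by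
  obtain ⟨hA, hB, hν, hA2, hB1⟩ := hA1
  have hAc : ∀ i j, ContDiffOn ℝ 1 (fun s => A s i j) (Set.Icc 0 T) := fun i j =>
    (contDiffOn_pi.mp (contDiffOn_pi.mp hA2 i) j).of_le (by norm_num)
  have hBc : ∀ i j, ContinuousOn (fun s => B s i j) (Set.Icc 0 T) := fun i j =>
    (contDiffOn_pi.mp (contDiffOn_pi.mp hB1 i) j).continuousOn
  obtain ⟨h, hh1, hh⟩ := exists_poisson hm hA hν hAc f
  have hhc : ∀ i, ContinuousOn (fun s => h s i) (Set.Icc 0 T) := fun i => (hh1 i).continuousOn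
  have hνc : ContinuousOn (fun s => ∑ i, f i * ν s i) (Set.Icc 0 T) :=
    (continuousOn_finsetSum _ fun i _ => hhc i).congr fun s hs => (hh s hs).1.symm
  refine ⟨hνc, ?_⟩
  set h' : ℝ → Fin m → ℝ := fun s i => derivWithin (fun u => h u i) (Set.Icc 0 T) s with hh'
  have hU := uniqueDiffOn_Icc hT
  have hh'c : ∀ i, ContinuousOn (fun s => h' s i) (Set.Icc 0 T) := fun i =>
    (hh1 i).continuousOn_derivWithin hU le_rfl
  have hhd : ∀ s ∈ Set.Icc (0:ℝ) T, ∀ i,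
      HasDerivWithinAt (fun u => h u i) (h' s i) (Set.Icc 0 T) s := fun s hs i =>
    ((hh1 i).differentiableOn one_ne_zero s hs).hasDerivWithinAt
  set r : ℝ → Fin m → ℝ := fun s i => ∑ j, B s i j * h s j + h' s i with hr
  have hrc : ∀ i, ContinuousOn (fun s => r s i) (Set.Icc 0 T) := fun i =>
    (continuousOn_finsetSum _ fun j _ => (hBc i j).mul (hhc j)).add (hh'c i)
  obtain ⟨H, hH0, hH⟩ := exists_bound_family hhc
  obtain ⟨R, hR0, hR⟩ := exists_bound_family hrc
  refine ⟨2 * H + R * T + 1, by positivity, fun ε hε p hp hp0 hpos t ht => ?_⟩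
  have hpc : ∀ j, ContinuousOn (fun s => p s j) (Set.Icc 0 T) := fun j s hs =>
    (hp s hs j).continuousWithinAt
  -- Total mass is conserved, since the generators have zero row sums.
  have hmass : ∀ s ∈ Set.Icc (0:ℝ) T, ∑ i, p s i = 1 := by
    have hd : ∀ s ∈ Set.Icc (0:ℝ) T,
        HasDerivWithinAt (fun u => ∑ j, p u j) 0 (Set.Icc 0 T) s := by
      intro s hs
      have := HasDerivWithinAt.fun_sum (u := Finset.univ) fun j _ => hp s hs j
      refine this.congr_deriv ?_
      rw [Finset.sum_comm]
      simp only [← Finset.mul_sum, Finset.sum_add_distrib, (hA s hs).2, (hB s hs).2]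
      simp
    intro s hs
    have := (convex_Icc (0:ℝ) T).is_const_of_fderivWithin_eq_zero (𝕜 := ℝ)
      (f := fun u => ∑ j, p u j) (fun s hs => (hd s hs).differentiableWithinAt)
      (fun s hs => by
        have h0 := (hd s hs).hasFDerivWithinAt.fderivWithin (hU s hs)
        rw [h0]; ext; simp) hs ⟨le_rfl, hT.le⟩
    simpa [hp0] using this
  have hsub : Set.Icc 0 t ⊆ Set.Icc 0 T := Set.Icc_subset_Icc_right ht.2
  set g : ℝ → ℝ := fun s => ∑ j, p s j * f j - ∑ i, f i * ν s i with hg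
  set ρ : ℝ → ℝ := fun s => ∑ i, p s i * r s i with hρ
  set φ : ℝ → ℝ := fun s => ∑ i, p s i * h s i with hφ
  have hgc : ContinuousOn g (Set.Icc 0 T) :=
    (continuousOn_finsetSum _ fun j _ => (hpc j).mul continuousOn_const).sub hνc
  have hρc : ContinuousOn ρ (Set.Icc 0 T) :=
    continuousOn_finsetSum _ fun j _ => (hpc j).mul (hrc j)
  have hφd : ∀ s ∈ Set.Icc (0:ℝ) T,
      HasDerivWithinAt φ (ε⁻¹ * g s + ρ s) (Set.Icc 0 T) s := by
    intro s hs
    have := HasDerivWithinAt.fun_sum (u := Finset.univ) fun j _ => (hp s hs j).mul (hhd s hs j)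
    refine HasDerivWithinAt.congr_deriv this ?_
    have e1 : g s = ∑ i, p s i * ∑ j, A s i j * h s j := by
      simp only [(hh s hs).2, mul_sub, Finset.sum_sub_distrib, ← Finset.sum_mul, hmass s hs,
        one_mul, (hh s hs).1, hg]
    have e2 : ∑ j, (∑ i, p s i * (ε⁻¹ * A s i j + B s i j)) * h s j
        = ε⁻¹ * (∑ i, p s i * ∑ j, A s i j * h s j) + ∑ i, p s i * ∑ j, B s i j * h s j := by
      simp only [Finset.sum_mul, Finset.mul_sum]
      rw [Finset.sum_comm, ← Finset.sum_add_distrib]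
      refine Finset.sum_congr rfl fun i _ => ?_
      rw [← Finset.sum_add_distrib]
      exact Finset.sum_congr rfl fun j _ => by ring
    rw [Finset.sum_add_distrib, e2, e1, hρ]
    simp only [hr, mul_add, Finset.sum_add_distrib]
    ring
  have hφc : ContinuousOn φ (Set.Icc 0 T) := fun s hs => (hφd s hs).continuousWithinAt
  have hgi : IntervalIntegrable g volume 0 t :=
    (hgc.mono hsub).intervalIntegrable_of_Icc ht.1
  have hρi : IntervalIntegrable ρ volume 0 t :=
    (hρc.mono hsub).intervalIntegrable_of_Icc ht.1
  have hftc : ∫ s in (0:ℝ)..t, (ε⁻¹ * g s + ρ s) = φ t - φ 0 := by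
    refine intervalIntegral.integral_eq_sub_of_hasDerivAt_of_le ht.1 (hφc.mono hsub)
      (fun s hs => ?_) ((hgi.const_mul _).add hρi)
    exact (hφd s ⟨hs.1.le, hs.2.le.trans ht.2⟩).hasDerivAt
      (Icc_mem_nhds hs.1 (hs.2.trans_le ht.2))
  rw [intervalIntegral.integral_add (hgi.const_mul _) hρi,
    intervalIntegral.integral_const_mul] at hftc
  have key : ∫ s in (0:ℝ)..t, g s = ε * (φ t - φ 0 - ∫ s in (0:ℝ)..t, ρ s) := by
    rw [← hftc]; field_simp; ring
  have b : ∀ s ∈ Set.Icc (0:ℝ) T, |φ s| ≤ H := fun s hs =>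
    abs_sum_prob_le (hpos s hs) (hmass s hs) (hH s hs)
  have b3 : |∫ s in (0:ℝ)..t, ρ s| ≤ R * T := by
    have := intervalIntegral.norm_integral_le_of_norm_le_const (a := 0) (b := t) (C := R) (f := ρ)
      (fun s hs => by
        rw [Set.uIoc_of_le ht.1] at hs
        have hs' : s ∈ Set.Icc (0:ℝ) T := ⟨hs.1.le, hs.2.trans ht.2⟩
        exact abs_sum_prob_le (hpos s hs') (hmass s hs') (hR s hs'))
    rw [sub_zero, abs_of_nonneg ht.1] at this
    exact this.trans (mul_le_mul_of_nonneg_left ht.2 hR0)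
  rw [key, abs_mul, abs_of_pos hε, mul_comm]
  refine mul_le_mul_of_nonneg_right ?_ hε.le
  have b1 := b t ht
  have b2 := b 0 ⟨le_rfl, hT.le⟩
  rw [abs_le] at b1 b2 b3 ⊢
  constructor <;> linarith [b1.1, b1.2, b2.1, b2.2, b3.1, b3.2]

/-- Almost surely, the row of `P(0,t)` at the initial state is nonnegative for all `t`
simultaneously. There is no uncountable union of null sets: if `P(0,t)^{ij} < 0` for a single
`t` and `j`, then the state `i` has probability zero at time `0`. -/
lemma ae_row_nonneg {m : ℕ} {Ω : Type*} [MeasurableSpace Ω] {μ : Measure Ω} {T : ℝ}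
    {P : ℝ → ℝ → Matrix (Fin m) (Fin m) ℝ} {α : ℝ → Ω → Fin m} (hα : IsMarkovChain μ T P α) :
    ∀ᵐ ω ∂μ, ∀ t ∈ Set.Icc (0:ℝ) T, ∀ j, 0 ≤ P 0 t (α 0 ω) j := by
  have key : ∀ i, ∀ᵐ ω ∂μ, α 0 ω = i → ∀ t ∈ Set.Icc (0:ℝ) T, ∀ j, 0 ≤ P 0 t i j := by
    intro i
    by_cases hi : ∀ t ∈ Set.Icc (0:ℝ) T, ∀ j, 0 ≤ P 0 t i j
    · exact ae_of_all _ fun _ _ => hi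
    · push Not at hi
      obtain ⟨t, ht, j, hneg⟩ := hi
      have hnn : 0 ≤ᵐ[μ] μ[(fun ω => if α t ω = j then (1:ℝ) else 0) | chainFiltration α 0] :=
        condExp_nonneg (ae_of_all _ fun ω => by
          change (0:ℝ) ≤ if α t ω = j then (1:ℝ) else 0
          split_ifs <;> norm_num)
      filter_upwards [hnn, hα.2 0 t le_rfl ht.1 ht.2 j] with ω h1 h2 h3
      rw [h2, h3] at h1
      exact absurd hneg (not_lt.mpr h1)
  filter_upwards [ae_all_iff.mpr key] with ω hω using hω _ rfl

/-- Proposition 3.5, finite state space. Under (A1), there are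
`K, ε₀ > 0` depending only on `T, A, B, f` such that for every `ε ∈ (0,ε₀]`, almost surely
`sup_{0≤t≤T} |ξ_ε(t) - ε^{-1/2} M̃_ε(t)| ≤ K √ε`. -/
theorem xi_martingale_approximation {m : ℕ} (hm : 1 ≤ m) (T : ℝ) (hT : 0 < T)
    (A B : ℝ → Matrix (Fin m) (Fin m) ℝ) (ν : ℝ → Fin m → ℝ)
    (hA1 : HypA1 T A B ν) (f : Fin m → ℝ) :
    ∃ K ε₀ : ℝ, 0 < K ∧ 0 < ε₀ ∧ ∀ ε ∈ Set.Ioc (0:ℝ) ε₀,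
      ∀ (Ω : Type) [MeasurableSpace Ω] (μ : Measure Ω) [IsProbabilityMeasure μ],
      ∀ P : ℝ → ℝ → Matrix (Fin m) (Fin m) ℝ,
        (∀ t₀ ∈ Set.Icc (0:ℝ) T,
          IsForwardSolution (fun u => ε⁻¹ • A u + B u) T t₀ (P t₀)) →
      ∀ α : ℝ → Ω → Fin m, IsMarkovChain μ T P α →
      ∀ᵐ ω ∂μ, ∀ t ∈ Set.Icc (0:ℝ) T,
        |xiOcc ν f α ε t ω - (Real.sqrt ε)⁻¹ * Mtilde ν f P α t ω|
          ≤ K * Real.sqrt ε := by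
  obtain ⟨hνc, K, hK, hbound⟩ := integral_bound hm hT hA1 f
  refine ⟨K, 1, hK, one_pos, fun ε hε Ω _ μ _ P hP α hα => ?_⟩
  have h0 : (0:ℝ) ∈ Set.Icc (0:ℝ) T := ⟨le_rfl, hT.le⟩
  obtain ⟨hP0, hPd⟩ := hP 0 h0
  filter_upwards [ae_row_nonneg hα] with ω hω t ht
  have hsub : Set.Icc 0 t ⊆ Set.Icc 0 T := Set.Icc_subset_Icc_right ht.2
  have hb := hbound ε hε.1 (fun s => P 0 s (α 0 ω))
    (fun s hs j => by
      have := hPd s hs (α 0 ω) j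
      simpa [Matrix.mul_apply] using this)
    (by simp [hP0, Matrix.one_apply]) hω t ht
  have hνi : IntervalIntegrable (fun s => ∑ i, f i * ν s i) volume 0 t :=
    (hνc.mono hsub).intervalIntegrable_of_Icc ht.1
  -- Sample paths are measurable with finitely many values, hence integrable.
  have hfi : IntervalIntegrable (fun s => f (α s ω)) volume 0 t := by
    have hmeas : Measurable fun s => f (α s ω) :=
      (measurable_of_finite f).comp (hα.1.comp measurable_prodMk_right)
    rw [intervalIntegrable_iff]
    refine Measure.integrableOn_of_bounded (M := ∑ i, |f i|) (by simp)
      hmeas.aestronglyMeasurable (ae_of_all _ fun s => ?_)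
    exact Finset.single_le_sum (f := fun i => |f i|) (fun i _ => abs_nonneg _)
      (Finset.mem_univ (α s ω))
  have hrow : (fun s => ∑ j, (P 0 s - oneNu (ν s)) (α 0 ω) j * f j)
      = fun s => ∑ j, P 0 s (α 0 ω) j * f j - ∑ i, f i * ν s i := by
    funext s
    simp only [Matrix.sub_apply, oneNu, Matrix.of_apply, sub_mul, Finset.sum_sub_distrib,
      mul_comm (f _)]
  have hgi : IntervalIntegrable (fun s => ∑ j, (P 0 s - oneNu (ν s)) (α 0 ω) j * f j)
      volume 0 t := by
    rw [hrow]
    refine IntervalIntegrable.sub ?_ hνi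
    refine ContinuousOn.intervalIntegrable_of_Icc ht.1 (ContinuousOn.mono ?_ hsub)
    exact continuousOn_finsetSum _ fun j _ =>
      ContinuousOn.mul (fun s hs => (hPd s hs (α 0 ω) j).continuousWithinAt) continuousOn_const
  unfold xiOcc Mtilde
  rw [intervalIntegral.integral_sub (hfi.sub hνi) hgi, ← mul_sub, sub_sub_cancel, hrow, abs_mul,
    abs_of_nonneg (by positivity)]
  have hs : 0 < Real.sqrt ε := Real.sqrt_pos.mpr hε.1
  rw [inv_mul_le_iff₀ hs]
  calc _ ≤ K * ε := hb
    _ = Real.sqrt ε * (K * Real.sqrt ε) := by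
      rw [mul_left_comm, Real.mul_self_sqrt hε.1.le]
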